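/- Let H be a holomorphic function on the punctured unit disc 𝔻* and let α ∈ ℂ. Assume that for every θ ∈ ℝ there exists a branch L_θ of the logarithm on 𝔻 ∖ l^θ such that the map z ↦ H(z)·exp(α·L_θ(z)) (a branch of H(z)·z^α) is injective on 𝔻 ∖ l^θ. Then H does not have an essential singularity at 0; that is, there exists n ∈ ℕ such that z ↦ z^n·H(z) extends holomorphically across 0. -/

import Mathlib

open Complex Metric Set Filter Topology

/-- The closed ray `{t·e^{iθ} : t ≥ 0} ⊆ ℂ`. -/
def lray (θ : ℝ) : Set ℂ :=
  {z : ℂ | ∃ t : ℝ, 0 ≤ t ∧ z = (t : ℂ) * Complex.exp (θ * Complex.I)}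


lemma bloch_aux (g : ℂ → ℂ) (c : ℂ) (r : ℝ) (hr : 0 < r)
    (hg : DifferentiableOn ℂ g (ball c r))
    (hno : ∀ w₁ ∈ ball c r, ∀ w₂ ∈ ball c r, g w₁ ≠ g w₂ + 2 * Real.pi * I) :
    ‖deriv g c‖ * r ≤ 2000 := by
  by_contra! hcon
  have hg' : DifferentiableOn ℂ (deriv g) (ball c r) := hg.deriv isOpen_ball
  have hsub : closedBall c (r/2) ⊆ ball c r := closedBall_subset_ball (by linarith)
  have hcont : ContinuousOn (fun z => (r/2 - ‖z - c‖) * ‖deriv g z‖) (closedBall c (r/2)) := by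
    apply ContinuousOn.mul
    · fun_prop
    · exact (hg'.continuousOn.mono hsub).norm
  obtain ⟨a, ha, hmax⟩ := (isCompact_closedBall c (r/2)).exists_isMaxOn
    ⟨c, mem_closedBall_self (by linarith)⟩ hcont
  have hmax' : ∀ z ∈ closedBall c (r/2),
    (r/2 - ‖z - c‖) * ‖deriv g z‖ ≤ (r/2 - ‖a - c‖) * ‖deriv g a‖ := fun z hz => hmax hz
  have h0 := hmax' c (mem_closedBall_self (by linarith))
  simp only [sub_self, norm_zero, sub_zero] at h0
  obtain ⟨t, ht⟩ : ∃ t, t = (r/2 - ‖a - c‖)/2 := ⟨_, rfl⟩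
  obtain ⟨D, hD⟩ : ∃ D, D = ‖deriv g a‖ := ⟨_, rfl⟩
  have hac : ‖a - c‖ ≤ r/2 := by simpa [dist_eq_norm] using ha
  have h1 : 500 < t * D := by
    rw [ht, hD]; nlinarith
  have hD0 : 0 ≤ D := by rw [hD]; positivity
  have ht0 : 0 < t := by
    have : 0 ≤ t := by rw [ht]; linarith
    rcases this.eq_or_lt with h | h
    · rw [← h] at h1; linarith
    · exact h
  have hDp : 0 < D := by
    rcases hD0.eq_or_lt with h | h
    · rw [← h] at h1; linarith
    · exact h
  have hnc : ∀ z, ‖z - a‖ ≤ t → ‖z - c‖ ≤ r/2 - t := by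
    intro z hz
    have : ‖z - c‖ ≤ ‖z - a‖ + ‖a - c‖ := by
      have := norm_add_le (z - a) (a - c)
      simpa using this
    linarith
  have hsubt : closedBall a t ⊆ ball c r := by
    intro z hz
    have := hnc z (by simpa [dist_eq_norm] using hz)
    rw [mem_ball, dist_eq_norm]; linarith
  have hbd : ∀ z ∈ closedBall a t, ‖deriv g z‖ ≤ 2 * D := by
    intro z hz
    have hz1 := hnc z (by simpa [dist_eq_norm] using hz)
    have := hmax' z (by rw [mem_closedBall, dist_eq_norm]; linarith)
    rw [← hD] at this
    have h2 : t * ‖deriv g z‖ ≤ (r/2 - ‖z - c‖) * ‖deriv g z‖ := by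
      gcongr; linarith
    have h3 : t * ‖deriv g z‖ ≤ t * (2 * D) := by
      calc _ ≤ _ := h2
        _ ≤ _ := this
        _ = _ := by rw [ht]; ring
    exact le_of_mul_le_mul_left h3 ht0
  have hdd : ∀ z ∈ closedBall a (t/8), ‖deriv (deriv g) z‖ ≤ 2 * D / (t/2) := by
    intro z hz
    have hs : closedBall z (t/2) ⊆ closedBall a t := by
      apply closedBall_subset_closedBall'
      rw [mem_closedBall] at hz; linarith
    apply norm_deriv_le_of_forall_mem_sphere_norm_le (by positivity)
    · apply DifferentiableOn.diffContOnCl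
      rw [closure_ball _ (by positivity)]
      exact hg'.mono (hs.trans hsubt)
    · intro w hw
      exact hbd w (hs (sphere_subset_closedBall hw))
  have hs8 : closedBall a (t/8) ⊆ ball c r :=
    (closedBall_subset_closedBall (by linarith)).trans hsubt
  have haa : a ∈ closedBall a (t/8) := mem_closedBall_self (by positivity)
  have hd1 : ∀ z ∈ closedBall a (t/8), ‖deriv g z - deriv g a‖ ≤ D/2 := by
    intro z hz
    have := Convex.norm_image_sub_le_of_norm_deriv_le (𝕜 := ℂ) (f := deriv g)
      (fun x hx => hg'.differentiableAt (isOpen_ball.mem_nhds (hs8 hx))) hdd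
      (convex_closedBall a (t/8)) haa hz
    refine this.trans ?_
    have hz' : ‖z - a‖ ≤ t/8 := by simpa [dist_eq_norm] using hz
    calc _ ≤ 2 * D / (t/2) * (t/8) := by gcongr
      _ = D/2 := by field_simp; ring
  have hd2 : ∀ z ∈ closedBall a (t/8),
      ‖(g z - deriv g a * z) - (g a - deriv g a * a)‖ ≤ D/2 * ‖z - a‖ := by
    intro z hz
    have hder : ∀ x ∈ closedBall a (t/8),
        HasDerivAt (fun y => g y - deriv g a * y) (deriv g x - deriv g a) x := by
      intro x hx
      have e1 := (hg.differentiableAt (isOpen_ball.mem_nhds (hs8 hx))).hasDerivAt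
      have e2 := e1.fun_sub ((hasDerivAt_id x).const_mul (deriv g a))
      rw [mul_one] at e2
      exact e2
    exact (convex_closedBall a (t/8)).norm_image_sub_le_of_norm_hasDerivWithin_le (𝕜 := ℂ)
      (f := fun y => g y - deriv g a * y)
      (fun x hx => (hder x hx).hasDerivWithinAt) hd1 haa hz
  have hlow : ∀ z ∈ closedBall a (t/8), D/2 * ‖z - a‖ ≤ ‖g z - g a‖ := by
    intro z hz
    have h5 := hd2 z hz
    have h6 : ‖deriv g a * (z - a)‖ ≤ ‖g z - g a‖ +
        ‖(g z - deriv g a * z) - (g a - deriv g a * a)‖ := by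
      have := norm_sub_le (g z - g a) ((g z - deriv g a * z) - (g a - deriv g a * a))
      have e : deriv g a * (z - a) =
          (g z - g a) - ((g z - deriv g a * z) - (g a - deriv g a * a)) := by ring
      rw [e]
      exact this
    rw [norm_mul, ← hD] at h6
    linarith
  have himg := DiffContOnCl.ball_subset_image_closedBall (f := g) (z₀ := a) (r := t/8)
    (ε := D/2*(t/8)) (by
      apply DifferentiableOn.diffContOnCl
      rw [closure_ball _ (by positivity)]
      exact hg.mono hs8) (by positivity) (by
      intro z hz
      have := hlow z (sphere_subset_closedBall hz)
      rwa [mem_sphere_iff_norm.1 hz] at this) (by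
      have hne : ∀ᶠ z in 𝓝[≠] a, g z ≠ g a := by
        have hm : closedBall a (t/8) ∈ 𝓝 a := closedBall_mem_nhds _ (by positivity)
        filter_upwards [mem_nhdsWithin_of_mem_nhds hm, self_mem_nhdsWithin] with z hz hza heq
        have := hlow z hz
        rw [heq, sub_self, norm_zero] at this
        have h7 : 0 < ‖z - a‖ := norm_pos_iff.2 (sub_ne_zero.2 hza)
        have : 0 < D/2 * ‖z - a‖ := by positivity
        linarith
      exact hne.frequently.filter_mono nhdsWithin_le_nhds)
  have hmem : g a + 2 * Real.pi * I ∈ ball (g a) (D/2*(t/8)/2) := by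
    rw [mem_ball, dist_eq_norm]
    have : ‖g a + 2 * Real.pi * I - g a‖ = 2 * Real.pi := by
      rw [add_sub_cancel_left]
      simp [abs_of_pos Real.pi_pos]
    rw [this]
    nlinarith [Real.pi_lt_four]
  obtain ⟨w, hw, hwe⟩ := himg hmem
  exact hno w (hs8 hw) a (hs8 haa) hwe

lemma koebe_aux (f : ℂ → ℂ) (c : ℂ) (r : ℝ) (hr : 0 < r)
    (hf : DifferentiableOn ℂ f (ball c r)) (h0 : ∀ z ∈ ball c r, f z ≠ 0)
    (hinj : InjOn f (ball c r)) : ‖deriv f c‖ * r ≤ 2000 * ‖f c‖ := by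
  have hf' : DifferentiableOn ℂ (deriv f) (ball c r) := hf.deriv isOpen_ball
  obtain ⟨g, hg⟩ := (hf'.div hf h0).isExactOn_ball
  have hfd : ∀ z ∈ ball c r, HasDerivAt f (deriv f z) z := fun z hz =>
    (hf.differentiableAt (isOpen_ball.mem_nhds hz)).hasDerivAt
  have hq : ∀ z ∈ ball c r, HasDerivAt (fun z => f z * Complex.exp (-g z)) 0 z := by
    intro z hz
    have := (hfd z hz).fun_mul (hg z hz).fun_neg.cexp
    have h1 := h0 z hz
    have e : deriv f z * Complex.exp (-g z) +
        f z * (Complex.exp (-g z) * -(deriv f z / f z)) = 0 := by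
      field_simp
      ring
    exact e ▸ this
  obtain ⟨k, hk⟩ := isOpen_ball.exists_is_const_of_deriv_eq_zero
    (convex_ball c r).isPreconnected
    (fun z hz => (hq z hz).differentiableAt.differentiableWithinAt) (fun z hz => (hq z hz).deriv)
  have hfe : ∀ z ∈ ball c r, f z = k * Complex.exp (g z) := by
    intro z hz
    rw [← hk z hz, mul_assoc, ← Complex.exp_add]; simp
  have hc := mem_ball_self hr (x := c)
  have := bloch_aux g c r hr (fun z hz => (hg z hz).differentiableAt.differentiableWithinAt) (by
    intro w₁ h₁ w₂ h₂ heq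
    have : f w₁ = f w₂ := by
      rw [hfe _ h₁, hfe _ h₂, heq, Complex.exp_add, Complex.exp_two_pi_mul_I, mul_one]
    have := hinj h₁ h₂ this
    rw [this] at heq
    have h2 : (2 * Real.pi * I : ℂ) = 0 := by
      linear_combination -heq
    exact Complex.two_pi_I_ne_zero h2)
  rw [(hg c hc).deriv, Pi.div_apply, norm_div] at this
  have hp : 0 < ‖f c‖ := norm_pos_iff.2 (h0 c hc)
  rw [div_mul_eq_mul_div, div_le_iff₀ hp] at this
  exact this

lemma exp_eq_of_mem_lray {θ : ℝ} {z : ℂ} (hz : z ≠ 0) (h : z ∈ lray θ) :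
    Complex.exp (θ * I) = z / ‖z‖ := by
  obtain ⟨t, ht, rfl⟩ := h
  have ht' : t ≠ 0 := by rintro rfl; simp at hz
  rw [norm_mul, Complex.norm_exp_ofReal_mul_I, mul_one, Complex.norm_real, Real.norm_of_nonneg ht]
  have : (t : ℂ) ≠ 0 := by exact_mod_cast ht'
  field_simp

lemma exists_theta_aux {z₁ z₂ : ℂ} (h₁ : z₁ ≠ 0) (h₂ : z₂ ≠ 0) :
    ∃ θ : ℝ, z₁ ∉ lray θ ∧ z₂ ∉ lray θ := by
  by_contra! hcon
  have key : ∀ θ : ℝ, Complex.exp (θ * I) = z₁ / ‖z₁‖ ∨ Complex.exp (θ * I) = z₂ / ‖z₂‖ := by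
    intro θ
    by_cases h : z₁ ∈ lray θ
    · exact Or.inl (exp_eq_of_mem_lray h₁ h)
    · exact Or.inr (exp_eq_of_mem_lray h₂ (hcon θ h))
  have a0 := key 0
  have a1 := key Real.pi
  have a2 := key (Real.pi / 2)
  have e2 : Complex.exp (((Real.pi / 2 : ℝ) : ℂ) * I) = I := by
    push_cast; exact Complex.exp_pi_div_two_mul_I
  rw [e2] at a2
  rw [Complex.exp_pi_mul_I] at a1
  simp only [Complex.ofReal_zero, zero_mul, Complex.exp_zero] at a0
  have n1 : (1 : ℂ) ≠ -1 := by norm_num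
  have n2 : (1 : ℂ) ≠ I := by intro h; simpa using congrArg Complex.re h
  have n3 : (-1 : ℂ) ≠ I := by intro h; simpa using congrArg Complex.re h
  rcases a0 with a0 | a0 <;> rcases a1 with a1 | a1 <;> rcases a2 with a2 | a2
  · exact n1 (a0.trans a1.symm)
  · exact n1 (a0.trans a1.symm)
  · exact n2 (a0.trans a2.symm)
  · exact n3 (a1.trans a2.symm)
  · exact n3 (a1.trans a2.symm)
  · exact n2 (a0.trans a2.symm)
  · exact n1 (a0.trans a1.symm)
  · exact n1 (a0.trans a1.symm)

lemma zero_mem_lray (θ : ℝ) : (0 : ℂ) ∈ lray θ := ⟨0, le_rfl, by simp⟩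

lemma ball_disjoint_aux {z₀ z : ℂ} (h0 : z₀ ≠ 0) (hz : z ∈ ball z₀ ‖z₀‖) :
    z ∉ lray (Complex.arg (-z₀)) := by
  rintro ⟨t, ht, rfl⟩
  have hn : (‖z₀‖ : ℂ) ≠ 0 := by simpa using h0
  have hp : 0 < ‖z₀‖ := norm_pos_iff.2 h0
  have e := Complex.norm_mul_exp_arg_mul_I (-z₀)
  rw [norm_neg] at e
  rw [mem_ball, dist_eq_norm] at hz
  have e2 : (t : ℂ) * Complex.exp (Complex.arg (-z₀) * I) - z₀ =
      ((t + ‖z₀‖ : ℝ) : ℂ) * Complex.exp (Complex.arg (-z₀) * I) := by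
    push_cast
    linear_combination -e
  rw [e2, norm_mul, Complex.norm_exp_ofReal_mul_I, mul_one, Complex.norm_real,
    Real.norm_of_nonneg (by positivity)] at hz
  linarith

lemma deriv_bound_aux (H : ℂ → ℂ) (α : ℂ)
    (hH : DifferentiableOn ℂ H (ball (0 : ℂ) 1 \ {0}))
    (hyp : ∀ θ : ℝ, ∃ L : ℂ → ℂ,
      DifferentiableOn ℂ L (ball (0 : ℂ) 1 \ lray θ) ∧
      (∀ z ∈ ball (0 : ℂ) 1 \ lray θ, Complex.exp (L z) = z) ∧
      InjOn (fun z => H z * Complex.exp (α * L z)) (ball (0 : ℂ) 1 \ lray θ))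
    (ρ : ℝ) (hρ1 : ρ ≤ 1) (hnz : ∀ z, z ≠ 0 → ‖z‖ < ρ → H z ≠ 0)
    (z₀ : ℂ) (hz0 : z₀ ≠ 0) (hz : 2 * ‖z₀‖ < ρ) :
    ‖deriv H z₀‖ * ‖z₀‖ ≤ (2000 + ‖α‖) * ‖H z₀‖ := by
  obtain ⟨L, hL, hexp, hinj⟩ := hyp (Complex.arg (-z₀))
  have hp : 0 < ‖z₀‖ := norm_pos_iff.2 hz0
  have hsmall : ∀ z ∈ ball z₀ ‖z₀‖, ‖z‖ < ρ := by
    intro z hz'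
    rw [mem_ball, dist_eq_norm] at hz'
    have := norm_add_le (z - z₀) z₀
    rw [sub_add_cancel] at this
    linarith
  have hsub : ball z₀ ‖z₀‖ ⊆ ball (0 : ℂ) 1 \ lray (Complex.arg (-z₀)) := by
    intro z hz'
    refine ⟨?_, ball_disjoint_aux hz0 hz'⟩
    rw [mem_ball_zero_iff]
    linarith [hsmall z hz']
  have hne : ∀ z ∈ ball z₀ ‖z₀‖, z ≠ 0 := by
    rintro z hz' rfl
    exact (hsub hz').2 (zero_mem_lray _)
  have hHd : DifferentiableOn ℂ H (ball z₀ ‖z₀‖) :=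
    hH.mono fun z hz' => ⟨(hsub hz').1, hne z hz'⟩
  have hLd := hL.mono hsub
  have hk := koebe_aux (fun z => H z * Complex.exp (α * L z)) z₀ ‖z₀‖ hp
    (hHd.mul (hLd.const_mul α).cexp)
    (fun z hz' => mul_ne_zero (hnz z (hne z hz') (hsmall z hz')) (Complex.exp_ne_zero _))
    (hinj.mono hsub)
  have hmem := mem_ball_self hp (x := z₀)
  have hnhds := isOpen_ball.mem_nhds hmem
  have hL' := (hLd.differentiableAt hnhds).hasDerivAt
  have hH' := (hHd.differentiableAt hnhds).hasDerivAt
  have hLz : z₀ * deriv L z₀ = 1 := by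
    have e1 := hL'.cexp
    have e2 : HasDerivAt (fun z => Complex.exp (L z)) 1 z₀ := by
      apply (hasDerivAt_id z₀).congr_of_eventuallyEq
      filter_upwards [hnhds] with z hz'
      exact hexp z (hsub hz')
    have := e1.unique e2
    rwa [hexp z₀ (hsub hmem)] at this
  have hder := (hH'.mul (hL'.const_mul α).cexp).deriv
  have hder' : deriv (fun z => H z * Complex.exp (α * L z)) z₀ * z₀ =
      (deriv H z₀ * z₀ + α * H z₀) * Complex.exp (α * L z₀) := by
    have h9 : deriv (fun z => H z * Complex.exp (α * L z)) z₀ = _ := hder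
    rw [h9]
    linear_combination (H z₀ * Complex.exp (α * L z₀) * α) * hLz
  rw [← norm_mul, hder', norm_mul, norm_mul, ← mul_assoc] at hk
  have hk2 := le_of_mul_le_mul_right hk (norm_pos_iff.2 (Complex.exp_ne_zero _))
  have := norm_sub_le (deriv H z₀ * z₀ + α * H z₀) (α * H z₀)
  rw [add_sub_cancel_right, norm_mul, norm_mul] at this
  linarith

theorem no_essential_singularity_of_injective_power_branches
    (H : ℂ → ℂ) (α : ℂ)
    (hH : DifferentiableOn ℂ H (ball (0 : ℂ) 1 \ {0}))
    (hyp : ∀ θ : ℝ, ∃ L : ℂ → ℂ,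
      DifferentiableOn ℂ L (ball (0 : ℂ) 1 \ lray θ) ∧
      (∀ z ∈ ball (0 : ℂ) 1 \ lray θ, Complex.exp (L z) = z) ∧
      InjOn (fun z => H z * Complex.exp (α * L z)) (ball (0 : ℂ) 1 \ lray θ)) :
    ∃ n : ℕ, ∃ G : ℂ → ℂ, DifferentiableOn ℂ G (ball (0 : ℂ) 1) ∧
      ∀ z ∈ ball (0 : ℂ) 1 \ {0}, G z = z ^ n * H z := by
  -- no zeros near the origin
  obtain ⟨ρ, hρ0, hρ1, hnz⟩ : ∃ ρ : ℝ, 0 < ρ ∧ ρ ≤ 1 ∧ ∀ z : ℂ, z ≠ 0 → ‖z‖ < ρ → H z ≠ 0 := by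
    by_cases hz : ∃ z₁ : ℂ, z₁ ≠ 0 ∧ ‖z₁‖ < 1 ∧ H z₁ = 0
    · obtain ⟨z₁, h1, h2, h3⟩ := hz
      refine ⟨‖z₁‖, norm_pos_iff.2 h1, h2.le, fun z hz0 hzl hz => ?_⟩
      obtain ⟨θ, ha, hb⟩ := exists_theta_aux h1 hz0
      obtain ⟨L, -, -, hinj⟩ := hyp θ
      have : z₁ = z := hinj ⟨by simpa using h2, ha⟩ ⟨by simpa using hzl.trans h2, hb⟩
        (by simp [h3, hz])
      rw [this] at hzl
      exact lt_irrefl _ hzl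
    · push Not at hz
      exact ⟨1, one_pos, le_rfl, hz⟩
  have hb := deriv_bound_aux H α hH hyp ρ hρ1 hnz
  obtain ⟨n, hn⟩ := exists_nat_ge (2000 + ‖α‖)
  obtain ⟨r, hr⟩ : ∃ r, r = ρ / 4 := ⟨_, rfl⟩
  have hr0 : 0 < r := by linarith
  have hopen : IsOpen (ball (0 : ℂ) 1 \ {0}) := isOpen_ball.sdiff isClosed_singleton
  have hsph : sphere (0 : ℂ) r ⊆ ball (0 : ℂ) 1 \ {0} := by
    intro z hz
    rw [mem_sphere_zero_iff_norm] at hz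
    refine ⟨by rw [mem_ball_zero_iff]; linarith, ?_⟩
    rintro rfl
    simp at hz; linarith
  obtain ⟨M, hM⟩ := (isCompact_sphere (0 : ℂ) r).exists_bound_of_continuousOn
    (hH.continuousOn.mono hsph)
  have hgrow : ∀ z ∈ ball (0 : ℂ) r \ {0}, ‖z ^ n * H z‖ ≤ M * r ^ n := by
    rintro z ⟨hz, hz0⟩
    rw [mem_ball_zero_iff] at hz
    have hz0 : z ≠ 0 := hz0
    have hp : 0 < ‖z‖ := norm_pos_iff.2 hz0
    have hpc : (‖z‖ : ℂ) ≠ 0 := by exact_mod_cast hp.ne'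
    have hrc : (r : ℂ) ≠ 0 := by exact_mod_cast hr0.ne'
    obtain ⟨u, hu⟩ : ∃ u : ℂ, u = (r / ‖z‖ : ℝ) * z := ⟨_, rfl⟩
    have hun : ‖u‖ = r := by
      rw [hu, norm_mul, Complex.norm_real, Real.norm_of_nonneg (by positivity)]
      field_simp
    obtain ⟨S, hS⟩ : ∃ S, S = Real.log (r / ‖z‖) := ⟨_, rfl⟩
    have hSe : Real.exp S = r / ‖z‖ := by rw [hS, Real.exp_log (by positivity)]
    have hS0 : 0 ≤ S := by
      rw [hS]; apply Real.log_nonneg; rw [le_div_iff₀ hp]; linarith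
    have hpt : ∀ s : ℝ, 0 ≤ s → ((Real.exp (-s) : ℝ) : ℂ) * u ≠ 0 ∧
        ‖((Real.exp (-s) : ℝ) : ℂ) * u‖ ≤ r := by
      intro s hs
      have e1 : ‖((Real.exp (-s) : ℝ) : ℂ) * u‖ = Real.exp (-s) * r := by
        rw [norm_mul, hun, Complex.norm_real, Real.norm_of_nonneg (Real.exp_pos _).le]
      have e2 : Real.exp (-s) ≤ 1 := Real.exp_le_one_iff.2 (by linarith)
      constructor
      · rw [← norm_pos_iff, e1]; have := Real.exp_pos (-s); positivity
      · rw [e1]; nlinarith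
    have hder : ∀ s : ℝ, 0 ≤ s → HasDerivAt (fun s : ℝ => H (((Real.exp (-s) : ℝ) : ℂ) * u))
        (deriv H (((Real.exp (-s) : ℝ) : ℂ) * u) * (((-Real.exp (-s) : ℝ) : ℂ) * u)) s := by
      intro s hs
      obtain ⟨q1, q2⟩ := hpt s hs
      have hHd : HasDerivAt H (deriv H (((Real.exp (-s) : ℝ) : ℂ) * u))
          (((Real.exp (-s) : ℝ) : ℂ) * u) := by
        refine (hH.differentiableAt (hopen.mem_nhds ⟨?_, q1⟩)).hasDerivAt
        rw [mem_ball_zero_iff]; linarith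
      have hi : HasDerivAt (fun s : ℝ => Real.exp (-s)) (-Real.exp (-s)) s := by
        simpa using (hasDerivAt_neg s).exp
      have hi2 : HasDerivAt (fun s : ℝ => ((Real.exp (-s) : ℝ) : ℂ) * u)
        (((-Real.exp (-s) : ℝ) : ℂ) * u) s := hi.ofReal_comp.mul_const u
      exact HasDerivAt.comp (h₂ := H) s hHd hi2
    have hG := norm_le_gronwallBound_of_norm_deriv_right_le
      (f := fun s : ℝ => H (((Real.exp (-s) : ℝ) : ℂ) * u)) (δ := M) (K := n) (ε := 0)
      (a := 0) (b := S)
      (fun s hs => (hder s hs.1).continuousAt.continuousWithinAt)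
      (fun s hs => (hder s hs.1).hasDerivWithinAt)
      (by simpa using hM u (by simpa using hun))
      (by
        intro s hs
        obtain ⟨q1, q2⟩ := hpt s hs.1
        have := hb _ q1 (by linarith)
        rw [← norm_mul] at this
        have e : ‖deriv H (((Real.exp (-s) : ℝ) : ℂ) * u) * (((-Real.exp (-s) : ℝ) : ℂ) * u)‖ =
          ‖deriv H (((Real.exp (-s) : ℝ) : ℂ) * u) * (((Real.exp (-s) : ℝ) : ℂ) * u)‖ := by
          rw [← norm_neg]; congr 1; push_cast; ring
        rw [e, add_zero]
        refine this.trans ?_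
        gcongr) S ⟨hS0, le_rfl⟩
    have hzS : ((Real.exp (-S) : ℝ) : ℂ) * u = z := by
      rw [Real.exp_neg, hSe, hu]; push_cast; field_simp
    rw [gronwallBound_ε0, sub_zero, Real.exp_nat_mul, hSe] at hG
    simp only [hzS] at hG
    rw [norm_mul, norm_pow]
    calc ‖z‖ ^ n * ‖H z‖ ≤ ‖z‖ ^ n * (M * (r / ‖z‖) ^ n) := by gcongr
      _ = M * r ^ n := by rw [div_pow]; field_simp
  have hd : DifferentiableOn ℂ (fun z => z ^ n * H z) (ball (0 : ℂ) 1 \ {0}) :=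
    (differentiableOn_id.pow n).mul hH
  refine ⟨n, Function.update (fun z => z ^ n * H z) 0
    (limUnder (𝓝[≠] 0) (fun z => z ^ n * H z)), ?_, ?_⟩
  · apply Complex.differentiableOn_update_limUnder_of_isLittleO (ball_mem_nhds _ one_pos) hd
    apply IsBoundedUnder.isLittleO_sub_self_inv
    refine ⟨M * r ^ n + ‖(0 : ℂ) ^ n * H 0‖, eventually_map.2 ?_⟩
    filter_upwards [mem_nhdsWithin_of_mem_nhds (ball_mem_nhds (0 : ℂ) hr0), self_mem_nhdsWithin]
      with z hz hz0
    exact norm_sub_le_of_le (hgrow z ⟨hz, hz0⟩) le_rfl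
  · rintro z ⟨-, hz⟩
    exact Function.update_of_ne hz _ _
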